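/- There is a constant C > 0, depending only on the dimension d, such that the following holds. Let u ∈ K_ob be of class C² on closure(B₁). Then F_ob(u) ≥ F_ob(φ) and (F_ob(u) − F_ob(φ))^{1/2} ≤ C ‖∇F_ob(u)‖_K. (Constrained Łojasiewicz inequality with exponent γ = 1/2 for the obstacle problem in the unit ball.) -/

import Mathlib

open MeasureTheory Filter Topology Set
open scoped RealInnerProductSpace

/-- The Laplacian of `u : ℝ^d → ℝ`, as the sum of the pure second derivatives
in the coordinate directions (junk value where `u` is not twice differentiable). -/
noncomputable def lapl {d : ℕ} (u : EuclideanSpace ℝ (Fin d) → ℝ)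
    (x : EuclideanSpace ℝ (Fin d)) : ℝ :=
  ∑ i : Fin d, iteratedFDeriv ℝ 2 u x ![EuclideanSpace.single i 1, EuclideanSpace.single i 1]

/-- The obstacle energy `F_ob(u) = (1/2)∫_{B₁}|∇u|² + ∫_{B₁} u`. -/
noncomputable def Fob (d : ℕ) (u : EuclideanSpace ℝ (Fin d) → ℝ) : ℝ :=
  (1/2) * (∫ x in Metric.ball (0 : EuclideanSpace ℝ (Fin d)) 1, ‖gradient u x‖ ^ 2) +
    ∫ x in Metric.ball (0 : EuclideanSpace ℝ (Fin d)) 1, u x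

/-- The admissible class `K_ob` of the obstacle problem: continuous functions on the closed
unit ball, nonnegative in `B₁`, equal to `g` on `∂B₁`. -/
def MemKob (d : ℕ) (g u : EuclideanSpace ℝ (Fin d) → ℝ) : Prop :=
  ContinuousOn u (Metric.closedBall (0 : EuclideanSpace ℝ (Fin d)) 1) ∧
  (∀ x ∈ Metric.ball (0 : EuclideanSpace ℝ (Fin d)) 1, 0 ≤ u x) ∧
  ∀ x ∈ Metric.sphere (0 : EuclideanSpace ℝ (Fin d)) 1, u x = g x

/-- The constrained norm `‖∇F_ob(u)‖_K`: `max(0, sup)` over `v ∈ K_ob` with `v ≠ u` in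
`L²(B₁)` of `(∫_{B₁}(v - u)(Δu - 1))/‖v - u‖_{L²(B₁)}`. -/
noncomputable def KnormOb (d : ℕ) (g u : EuclideanSpace ℝ (Fin d) → ℝ) : ℝ :=
  max 0 (sSup {r : ℝ | ∃ v : EuclideanSpace ℝ (Fin d) → ℝ, MemKob d g v ∧
    (∫ x in Metric.ball (0 : EuclideanSpace ℝ (Fin d)) 1, (v x - u x) ^ 2) ≠ 0 ∧
    r = (∫ x in Metric.ball (0 : EuclideanSpace ℝ (Fin d)) 1, (v x - u x) * (lapl u x - 1)) /
        Real.sqrt (∫ x in Metric.ball (0 : EuclideanSpace ℝ (Fin d)) 1, (v x - u x) ^ 2)})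

/-!
Both claims come from expanding the obstacle energy `F`, a quadratic functional.

Expanding around `φ` and testing the Euler–Lagrange equation with `u - φ` leaves
`F(u) - F(φ) = (1/2)∫|∇(u - φ)|² + ∫_{φ = 0} u`, which is nonnegative.

Expanding around `u` and applying Green's formula, which is licit because `φ - u` vanishes on the
boundary, gives `F(u) - F(φ) = ∫ (φ - u)(Δu - 1) - (1/2)∫|∇(φ - u)|²`. The first term is at most
`‖∇F(u)‖_K ‖φ - u‖_{L²}` because `φ` is itself a competitor in the supremum. By Poincaré's
inequality `‖φ - u‖_{L²} ≤ 2 ‖∇(φ - u)‖_{L²}`, so the negative term absorbs all but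
`2 ‖∇F(u)‖_K²`.

Since `u` and `φ` are regular only on the closed ball, integration by parts is carried out for
derivatives within a compact convex set: a `C¹` function vanishing on the frontier extends by zero
to a compactly supported Lipschitz function, whose line derivatives integrate to zero.
-/

section ExtensionByZero

theorem inter_frontier_nonempty_of_isPreconnected {X : Type*} [TopologicalSpace X] {s t : Set X}
    (ht : IsPreconnected t) (hs : (t ∩ s).Nonempty) (hs' : (t ∩ sᶜ).Nonempty) :
    (t ∩ frontier s).Nonempty := by
  by_contra! h
  have hcover : t ⊆ interior s ∪ interior sᶜ := fun x hx => by
    have hxs : x ∉ frontier s := fun hxs => (h.le ⟨hx, hxs⟩ : x ∈ (∅ : Set X))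
    rw [interior_compl]
    by_contra! hx'
    exact hxs ⟨by simpa using fun h' => hx' (Or.inr h'), fun h' => hx' (Or.inl h')⟩
  have hdisj : Disjoint (interior s) (interior sᶜ) :=
    disjoint_compl_right.mono interior_subset interior_subset
  obtain ⟨x, hxt, hxs⟩ := hs
  obtain ⟨y, hyt, hys⟩ := hs'
  have hx : x ∈ interior s := (hcover hxt).resolve_right fun h' => interior_subset h' hxs
  exact hys (interior_subset
    (ht.subset_left_of_subset_union isOpen_interior isOpen_interior hdisj hcover ⟨x, hxt, hx⟩ hyt))

theorem lipschitzWith_indicator_of_frontier {E F : Type*} [SeminormedAddCommGroup E]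
    [NormedSpace ℝ E] [SeminormedAddCommGroup F] {s : Set E} {f : E → F} {K : NNReal}
    (hs : IsClosed s) (hf : LipschitzOnWith K f s) (h0 : ∀ x ∈ frontier s, f x = 0) :
    LipschitzWith K (s.indicator f) := by
  -- A segment leaving `s` crosses the frontier, where `f` vanishes.
  have hcross : ∀ x ∈ s, ∀ y ∉ s, dist (f x) 0 ≤ K * dist x y := by
    intro x hx y hy
    obtain ⟨z, hz, hzs⟩ := inter_frontier_nonempty_of_isPreconnected
      (convex_segment x y).isPreconnected ⟨x, left_mem_segment ℝ x y, hx⟩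
      ⟨y, right_mem_segment ℝ x y, hy⟩
    calc dist (f x) 0 = dist (f x) (f z) := by rw [h0 z hzs]
      _ ≤ K * dist x z := hf.dist_le_mul x hx z (hs.frontier_subset hzs)
      _ ≤ K * dist x y := by
        rw [← dist_add_dist_of_mem_segment hz]
        exact mul_le_mul_of_nonneg_left (le_add_of_nonneg_right dist_nonneg) K.coe_nonneg
  refine LipschitzWith.of_dist_le_mul fun x y => ?_
  by_cases hx : x ∈ s <;> by_cases hy : y ∈ s
  · simpa [hx, hy] using hf.dist_le_mul x hx y hy
  · simpa [hx, hy] using hcross x hx y hy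
  · simpa [hx, hy, dist_comm] using hcross y hy x hx
  · simpa [hx, hy] using by positivity

theorem lineDeriv_indicator_ae_eq {E F : Type*} [NormedAddCommGroup E] [NormedSpace ℝ E]
    [NormedAddCommGroup F] [NormedSpace ℝ F] [MeasurableSpace E] {μ : Measure E} {s : Set E}
    {f : E → F} (hf : DifferentiableOn ℝ f s) (hs : μ (frontier s) = 0) (v : E) :
    (fun x => lineDeriv ℝ (s.indicator f) x v) =ᵐ[μ]
      s.indicator fun x => fderivWithin ℝ f s x v := by
  filter_upwards [measure_eq_zero_iff_ae_notMem.1 hs] with x hx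
  by_cases hxs : x ∈ s
  · have hnhds : s ∈ 𝓝 x := mem_interior_iff_mem_nhds.1
      (by_contra fun h => hx ⟨subset_closure hxs, h⟩)
    have heq : s.indicator f =ᶠ[𝓝 x] f := by
      filter_upwards [hnhds] with y hy using indicator_of_mem hy f
    rw [heq.lineDeriv_eq, (hf.differentiableAt hnhds).lineDeriv_eq_fderiv, indicator_of_mem hxs,
      fderivWithin_of_mem_nhds hnhds]
  · have hnhds : sᶜ ∈ 𝓝 x := by
      rw [← frontier_compl] at hx
      exact mem_interior_iff_mem_nhds.1
        (by_contra fun h => hx ⟨subset_closure hxs, h⟩)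
    have heq : s.indicator f =ᶠ[𝓝 x] fun _ => 0 := by
      filter_upwards [hnhds] with y hy using indicator_of_notMem hy f
    rw [heq.lineDeriv_eq, indicator_of_notMem hxs]
    simp [lineDeriv]

end ExtensionByZero

section IntegrationByParts

variable {E : Type*} [NormedAddCommGroup E] [NormedSpace ℝ E] {s : Set E}

theorem exists_lipschitzOnWith_of_contDiffOn {F : Type*} [NormedAddCommGroup F] [NormedSpace ℝ F]
    {f : E → F} (hs : Convex ℝ s) (hsc : IsCompact s) (hsu : UniqueDiffOn ℝ s)
    (hf : ContDiffOn ℝ 1 f s) : ∃ K, LipschitzOnWith K f s := by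
  obtain ⟨C, hC⟩ := hsc.exists_bound_of_continuousOn (hf.continuousOn_fderivWithin hsu le_rfl)
  refine ⟨C.toNNReal, hs.lipschitzOnWith_of_nnnorm_fderivWithin_le (𝕜 := ℝ)
    (hf.differentiableOn one_ne_zero) fun x hx => ?_⟩
  rw [← NNReal.coe_le_coe, coe_nnnorm]
  exact (hC x hx).trans (Real.le_coe_toNNReal C)

theorem continuousOn_fderivWithin_apply {F : Type*} [NormedAddCommGroup F] [NormedSpace ℝ F]
    {f : E → F} (hsu : UniqueDiffOn ℝ s) (hf : ContDiffOn ℝ 1 f s) (v : E) :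
    ContinuousOn (fun x => fderivWithin ℝ f s x v) s :=
  (hf.continuousOn_fderivWithin hsu le_rfl).clm_apply continuousOn_const

variable [FiniteDimensional ℝ E] [MeasurableSpace E] [BorelSpace E] {μ : Measure E}
  [μ.IsAddHaarMeasure] {f g : E → ℝ}

theorem setIntegral_fderivWithin_eq_zero (hs : Convex ℝ s) (hsc : IsCompact s)
    (hsu : UniqueDiffOn ℝ s) (hf : ContDiffOn ℝ 1 f s) (h0 : ∀ x ∈ frontier s, f x = 0) (v : E) :
    ∫ x in s, fderivWithin ℝ f s x v ∂μ = 0 := by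
  obtain ⟨K, hK⟩ := exists_lipschitzOnWith_of_contDiffOn hs hsc hsu hf
  have hLip : LipschitzWith K (s.indicator f) :=
    lipschitzWith_indicator_of_frontier hsc.isClosed hK h0
  have hsupp : HasCompactSupport (s.indicator f) :=
    HasCompactSupport.intro hsc fun x hx => indicator_of_notMem hx f
  have hconst (x : E) : lineDeriv ℝ (fun _ : E => (1 : ℝ)) x (-v) = 0 := by simp [lineDeriv]
  calc ∫ x in s, fderivWithin ℝ f s x v ∂μ
      = ∫ x, lineDeriv ℝ (s.indicator f) x v ∂μ := by
        rw [← integral_indicator hsc.measurableSet]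
        exact integral_congr_ae (lineDeriv_indicator_ae_eq (hf.differentiableOn one_ne_zero)
          (hs.addHaar_frontier μ) v).symm
    _ = 0 := by
        simpa [hconst] using
          ((LipschitzWith.const (1 : ℝ)).integral_lineDeriv_mul_eq (μ := μ) hLip hsupp (-v)).symm

theorem setIntegral_mul_fderivWithin_eq_neg (hs : Convex ℝ s) (hsc : IsCompact s)
    (hsu : UniqueDiffOn ℝ s) (hf : ContDiffOn ℝ 1 f s) (hg : ContDiffOn ℝ 1 g s)
    (h0 : ∀ x ∈ frontier s, f x = 0) (v : E) :
    ∫ x in s, f x * fderivWithin ℝ g s x v ∂μ = -∫ x in s, g x * fderivWithin ℝ f s x v ∂μ := by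
  have hfg : IntegrableOn (fun x => f x * fderivWithin ℝ g s x v) s μ :=
    (hf.continuousOn.mul (continuousOn_fderivWithin_apply hsu hg v)).integrableOn_compact hsc
  have hgf : IntegrableOn (fun x => g x * fderivWithin ℝ f s x v) s μ :=
    (hg.continuousOn.mul (continuousOn_fderivWithin_apply hsu hf v)).integrableOn_compact hsc
  rw [eq_neg_iff_add_eq_zero, ← integral_add hfg hgf,
    ← setIntegral_fderivWithin_eq_zero (μ := μ) hs hsc hsu (hf.mul hg)
      (fun x hx => by simp [h0 x hx]) v]
  refine setIntegral_congr_fun hsc.measurableSet fun x hx => ?_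
  simp [fderivWithin_fun_mul (hsu x hx) (hf.differentiableOn one_ne_zero x hx)
    (hg.differentiableOn one_ne_zero x hx)]

theorem setIntegral_sq_le_mul_setIntegral_sq_fderivWithin (hs : Convex ℝ s) (hsc : IsCompact s)
    (hsu : UniqueDiffOn ℝ s) (hf : ContDiffOn ℝ 1 f s) (h0 : ∀ x ∈ frontier s, f x = 0)
    {ℓ : E →L[ℝ] ℝ} {v : E} (hv : ℓ v = 1) {r : ℝ} (hr : ∀ x ∈ s, |ℓ x| ≤ r) :
    ∫ x in s, f x ^ 2 ∂μ ≤ (2 * r) ^ 2 * ∫ x in s, fderivWithin ℝ f s x v ^ 2 ∂μ := by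
  set D : E → ℝ := fun x => fderivWithin ℝ f s x v
  have hD : ContinuousOn D s := continuousOn_fderivWithin_apply hsu hf v
  have hf2 : IntegrableOn (fun x => f x ^ 2) s μ := (hf.continuousOn.pow 2).integrableOn_compact hsc
  have hD2 : IntegrableOn (fun x => D x ^ 2) s μ := (hD.pow 2).integrableOn_compact hsc
  -- Since `ℓ` has derivative `1` along `v`, integrate `f ^ 2 * ∂ᵥℓ` by parts.
  have hparts : ∫ x in s, f x ^ 2 ∂μ = ∫ x in s, -(2 * ℓ x * f x * D x) ∂μ := by
    have h := setIntegral_mul_fderivWithin_eq_neg (μ := μ) hs hsc hsu (hf.pow 2)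
      ℓ.contDiff.contDiffOn (fun x hx => by simp [h0 x hx]) v
    rw [← integral_neg] at h
    refine (setIntegral_congr_fun hsc.measurableSet fun x hx => ?_).trans
      (h.trans (setIntegral_congr_fun hsc.measurableSet fun x hx => ?_))
    · simp [ℓ.fderivWithin (hsu x hx), hv]
    · simp only [D, fderivWithin_fun_pow (hsu x hx) 2 (hf.differentiableOn one_ne_zero x hx)]
      simp only [Nat.add_one_sub_one, pow_one, nsmul_eq_mul, Nat.cast_ofNat, smul_apply,
        smul_eq_mul, neg_inj]
      ring
  have hyoung : ∀ x ∈ s, -(2 * ℓ x * f x * D x) ≤ f x ^ 2 / 2 + 2 * r ^ 2 * D x ^ 2 := by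
    intro x hx
    have hℓ : ℓ x ^ 2 * D x ^ 2 ≤ r ^ 2 * D x ^ 2 :=
      mul_le_mul_of_nonneg_right (sq_le_sq' (neg_le_of_abs_le (hr x hx)) (le_of_abs_le (hr x hx)))
        (sq_nonneg _)
    linarith [sq_nonneg (f x + 2 * (ℓ x * D x))]
  have hbound : ∫ x in s, f x ^ 2 ∂μ ≤
      (∫ x in s, f x ^ 2 ∂μ) / 2 + 2 * r ^ 2 * ∫ x in s, D x ^ 2 ∂μ := by
    rw [← integral_div, ← integral_const_mul,
      ← integral_add (hf2.div_const 2) (hD2.const_mul (2 * r ^ 2))]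
    refine hparts.trans_le (setIntegral_mono_on ?_ ((hf2.div_const 2).add
      (hD2.const_mul (2 * r ^ 2))) hsc.measurableSet hyoung)
    exact (((continuousOn_const.mul ℓ.continuous.continuousOn).mul
      hf.continuousOn).mul hD).neg.integrableOn_compact hsc
  linarith

end IntegrationByParts

section Gradient

open InnerProductSpace

variable {E : Type*} [NormedAddCommGroup E] [InnerProductSpace ℝ E] [CompleteSpace E] {s : Set E}
  {f g : E → ℝ} {x : E}

theorem gradientWithin_of_mem_nhds (hx : s ∈ 𝓝 x) : gradientWithin f s x = gradient f x := by
  simp only [gradientWithin, gradient, fderivWithin_of_mem_nhds hx]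

theorem gradientWithin_fun_sub (hs : UniqueDiffWithinAt ℝ s x)
    (hf : DifferentiableWithinAt ℝ f s x) (hg : DifferentiableWithinAt ℝ g s x) :
    gradientWithin (fun y => f y - g y) s x = gradientWithin f s x - gradientWithin g s x := by
  simp only [gradientWithin, fderivWithin_fun_sub hs hf hg, map_sub]

theorem continuousOn_gradientWithin (hs : UniqueDiffOn ℝ s) (hf : ContDiffOn ℝ 1 f s) :
    ContinuousOn (gradientWithin f s) s :=
  (toDual ℝ E).symm.continuous.comp_continuousOn (hf.continuousOn_fderivWithin hs le_rfl)

end Gradient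

section Green

open InnerProductSpace

variable {E : Type*} [NormedAddCommGroup E] [InnerProductSpace ℝ E] [FiniteDimensional ℝ E]
  {s : Set E} {f u : E → ℝ}

theorem continuousOn_laplacianWithin (hs : UniqueDiffOn ℝ s) (hu : ContDiffOn ℝ 2 u s) :
    ContinuousOn (Δ[s] u) s := by
  refine ContinuousOn.congr ?_ fun x hx =>
    laplacianWithin_eq_iteratedFDerivWithin_stdOrthonormalBasis u hs hx
  exact continuousOn_finsetSum _ fun i _ =>
    (continuous_eval_const _).comp_continuousOn (hu.continuousOn_iteratedFDerivWithin le_rfl hs)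

theorem laplacianWithin_eq_sum_fderivWithin_fderivWithin {ι : Type*} [Fintype ι] {x : E}
    (hs : UniqueDiffOn ℝ s) (hu : ContDiffOn ℝ 2 u s) (hx : x ∈ s) (b : OrthonormalBasis ι ℝ E) :
    (Δ[s] u) x = ∑ i, fderivWithin ℝ (fun y => fderivWithin ℝ u s y (b i)) s x (b i) := by
  rw [laplacianWithin_eq_iteratedFDerivWithin_orthonormalBasis u hs hx b]
  refine Finset.sum_congr rfl fun i _ => ?_
  have hdiff : DifferentiableWithinAt ℝ (fderivWithin ℝ u s) s x :=
    (hu.fderivWithin hs (by norm_num : (1 : WithTop ℕ∞) + 1 ≤ 2)).differentiableOn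
      one_ne_zero x hx
  rw [iteratedFDerivWithin_two_apply' u hs hx,
    fderivWithin_clm_apply (hs x hx) hdiff (differentiableWithinAt_const _)]
  simp

variable [MeasurableSpace E] [BorelSpace E] {μ : Measure E} [μ.IsAddHaarMeasure]

theorem setIntegral_inner_gradientWithin_eq_neg (hs : Convex ℝ s) (hsc : IsCompact s)
    (hsu : UniqueDiffOn ℝ s) (hf : ContDiffOn ℝ 1 f s) (hu : ContDiffOn ℝ 2 u s)
    (h0 : ∀ x ∈ frontier s, f x = 0) :
    ∫ x in s, ⟪gradientWithin f s x, gradientWithin u s x⟫ ∂μ = -∫ x in s, f x * (Δ[s] u) x ∂μ := by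
  set b := stdOrthonormalBasis ℝ E
  have hDu (i) : ContDiffOn ℝ 1 (fun y => fderivWithin ℝ u s y (b i)) s :=
    (hu.fderivWithin hsu (by norm_num)).clm_apply contDiffOn_const
  have hint₁ (i) : IntegrableOn (fun x => fderivWithin ℝ u s x (b i) * fderivWithin ℝ f s x (b i))
      s μ :=
    ((hDu i).continuousOn.mul (continuousOn_fderivWithin_apply hsu hf _)).integrableOn_compact hsc
  have hint₂ (i) : IntegrableOn
      (fun x => f x * fderivWithin ℝ (fun y => fderivWithin ℝ u s y (b i)) s x (b i)) s μ :=
    (hf.continuousOn.mul (continuousOn_fderivWithin_apply hsu (hDu i) _)).integrableOn_compact hsc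
  calc ∫ x in s, ⟪gradientWithin f s x, gradientWithin u s x⟫ ∂μ
      = ∫ x in s, ∑ i, fderivWithin ℝ u s x (b i) * fderivWithin ℝ f s x (b i) ∂μ := by
        congr with x
        rw [← b.sum_inner_mul_inner]
        refine Finset.sum_congr rfl fun i _ => ?_
        rw [inner_gradientWithin_left, inner_gradientWithin_right, conj_trivial, mul_comm]
    _ = ∑ i, ∫ x in s, fderivWithin ℝ u s x (b i) * fderivWithin ℝ f s x (b i) ∂μ :=
        integral_finsetSum _ fun i _ => hint₁ i
    _ = ∑ i, -∫ x in s, f x * fderivWithin ℝ (fun y => fderivWithin ℝ u s y (b i)) s x (b i) ∂μ :=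
        Finset.sum_congr rfl fun i _ => by
          rw [setIntegral_mul_fderivWithin_eq_neg hs hsc hsu hf (hDu i) h0, neg_neg]
    _ = -∫ x in s, f x * (Δ[s] u) x ∂μ := by
        rw [Finset.sum_neg_distrib, ← integral_finsetSum _ fun i _ => hint₂ i]
        refine congrArg Neg.neg (setIntegral_congr_fun hsc.measurableSet fun x hx => ?_)
        simp only [laplacianWithin_eq_sum_fderivWithin_fderivWithin hsu hu hx b, Finset.mul_sum]

theorem setIntegral_sq_le_mul_setIntegral_norm_gradientWithin_sq [Nontrivial E] (hs : Convex ℝ s)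
    (hsc : IsCompact s) (hsu : UniqueDiffOn ℝ s) (hf : ContDiffOn ℝ 1 f s)
    (h0 : ∀ x ∈ frontier s, f x = 0) {r : ℝ} (hr : s ⊆ Metric.closedBall 0 r) :
    ∫ x in s, f x ^ 2 ∂μ ≤ (2 * r) ^ 2 * ∫ x in s, ‖gradientWithin f s x‖ ^ 2 ∂μ := by
  obtain ⟨e, he⟩ := exists_norm_eq E zero_le_one
  have hℓ : ∀ x ∈ s, |innerSL ℝ e x| ≤ r := fun x hx =>
    (abs_real_inner_le_norm e x).trans (by simpa [he] using hr hx)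
  refine (setIntegral_sq_le_mul_setIntegral_sq_fderivWithin hs hsc hsu hf h0
    (show innerSL ℝ e e = 1 by simp [he]) hℓ).trans ?_
  refine mul_le_mul_of_nonneg_left (setIntegral_mono_on ?_ ?_ hsc.measurableSet fun x _ => ?_)
    (sq_nonneg _)
  · exact ((continuousOn_fderivWithin_apply hsu hf e).pow 2).integrableOn_compact hsc
  · exact ((continuousOn_gradientWithin hsu hf).norm.pow 2).integrableOn_compact hsc
  · rw [← inner_gradientWithin_left, sq_le_sq, abs_norm]
    simpa [he] using abs_real_inner_le_norm (gradientWithin f s x) e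

end Green

section ObstacleEnergy

open InnerProductSpace

variable {E : Type*} [NormedAddCommGroup E] [InnerProductSpace ℝ E] [MeasurableSpace E]

/-- The obstacle energy `(1/2)∫_s |∇u|² + ∫_s u` on a set `s`. The gradient is the one within `s`,
so that for `u` of class `C¹` on a compact `s` the integrands are continuous up to the boundary. -/
noncomputable def obstacleEnergy [CompleteSpace E] (μ : Measure E) (s : Set E) (u : E → ℝ) : ℝ :=
  1 / 2 * ∫ x in s, ‖gradientWithin u s x‖ ^ 2 ∂μ + ∫ x in s, u x ∂μ

variable {s : Set E} {u v φ : E → ℝ}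

theorem obstacleEnergy_sub_obstacleEnergy [CompleteSpace E] [BorelSpace E] {μ : Measure E}
    [IsFiniteMeasureOnCompacts μ] (hsc : IsCompact s) (hsu : UniqueDiffOn ℝ s)
    (hu : ContDiffOn ℝ 1 u s) (hv : ContDiffOn ℝ 1 v s) :
    obstacleEnergy μ s v - obstacleEnergy μ s u =
      ∫ x in s, ⟪gradientWithin (fun y => v y - u y) s x, gradientWithin u s x⟫ ∂μ +
        1 / 2 * ∫ x in s, ‖gradientWithin (fun y => v y - u y) s x‖ ^ 2 ∂μ +
        ∫ x in s, (v x - u x) ∂μ := by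
  have hw := hv.sub hu
  have hgu := continuousOn_gradientWithin hsu hu
  have hgw := continuousOn_gradientWithin hsu hw
  have hintu : IntegrableOn (fun x => ‖gradientWithin u s x‖ ^ 2) s μ :=
    (hgu.norm.pow 2).integrableOn_compact hsc
  have hintw : IntegrableOn (fun x => ‖gradientWithin (fun y => v y - u y) s x‖ ^ 2) s μ :=
    (hgw.norm.pow 2).integrableOn_compact hsc
  have hinter := (hgw.inner (𝕜 := ℝ) hgu).integrableOn_compact (μ := μ) hsc
  have hsq : ∫ x in s, ‖gradientWithin v s x‖ ^ 2 ∂μ =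
      ∫ x in s, ‖gradientWithin (fun y => v y - u y) s x‖ ^ 2 ∂μ +
        2 * ∫ x in s, ⟪gradientWithin (fun y => v y - u y) s x, gradientWithin u s x⟫ ∂μ +
        ∫ x in s, ‖gradientWithin u s x‖ ^ 2 ∂μ := by
    have hintsum : IntegrableOn (fun x => ‖gradientWithin (fun y => v y - u y) s x‖ ^ 2 +
        2 * ⟪gradientWithin (fun y => v y - u y) s x, gradientWithin u s x⟫) s μ :=
      hintw.add (hinter.const_mul 2)
    rw [← integral_const_mul, ← integral_add hintw (hinter.const_mul 2),
      ← integral_add hintsum hintu]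
    refine setIntegral_congr_fun hsc.measurableSet fun x hx => ?_
    simp only [← norm_add_sq_real, gradientWithin_fun_sub (hsu x hx)
      (hv.differentiableOn one_ne_zero x hx) (hu.differentiableOn one_ne_zero x hx), sub_add_cancel]
  rw [integral_sub (hv.continuousOn.integrableOn_compact hsc)
    (hu.continuousOn.integrableOn_compact hsc), obstacleEnergy, obstacleEnergy, hsq]
  ring

theorem obstacleEnergy_le_of_eulerLagrange [FiniteDimensional ℝ E] [BorelSpace E] {μ : Measure E}
    [μ.IsAddHaarMeasure] (hs : Convex ℝ s) (hsc : IsCompact s) (hsu : UniqueDiffOn ℝ s)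
    (hφ : ContDiffOn ℝ 1 φ s) (hu : ContDiffOn ℝ 1 u s) (hu0 : ∀ x ∈ interior s, 0 ≤ u x)
    (hEL : ∫ x in s, ⟪gradientWithin (fun y => u y - φ y) s x, gradientWithin φ s x⟫ ∂μ =
      -∫ x in interior s ∩ {y | 0 < φ y}, (u x - φ x) ∂μ) :
    obstacleEnergy μ s φ ≤ obstacleEnergy μ s u := by
  have hpos : IsOpen (interior s ∩ {y | 0 < φ y}) :=
    (hφ.continuousOn.mono interior_subset).isOpen_inter_preimage isOpen_interior isOpen_Ioi
  have hint : IntegrableOn (fun x => u x - φ x) (interior s) μ :=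
    ((hu.sub hφ).continuousOn.integrableOn_compact hsc).mono_set interior_subset
  -- Where `φ ≤ 0 ≤ u` the integrand `u - φ` is nonnegative.
  have hcontact : ∫ x in interior s ∩ {y | 0 < φ y}, (u x - φ x) ∂μ ≤ ∫ x in s, (u x - φ x) ∂μ := by
    rw [← setIntegral_congr_set (interior_ae_eq_of_null_frontier (hs.addHaar_frontier μ)),
      ← sub_nonneg, ← setIntegral_sdiff hpos.measurableSet hint inter_subset_left]
    refine setIntegral_nonneg (measurableSet_interior.diff hpos.measurableSet) fun x hx => ?_
    have hφx : φ x ≤ 0 := not_lt.1 fun h => hx.2 ⟨hx.1, h⟩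
    linarith [hu0 x hx.1]
  have hD : 0 ≤ ∫ x in s, ‖gradientWithin (fun y => u y - φ y) s x‖ ^ 2 ∂μ :=
    integral_nonneg fun x => sq_nonneg _
  linarith [obstacleEnergy_sub_obstacleEnergy (μ := μ) hsc hsu hφ hu]

variable [FiniteDimensional ℝ E] [BorelSpace E] {μ : Measure E} [μ.IsAddHaarMeasure]

theorem obstacleEnergy_sub_obstacleEnergy_eq_slope_sub (hs : Convex ℝ s) (hsc : IsCompact s)
    (hsu : UniqueDiffOn ℝ s) (hu : ContDiffOn ℝ 2 u s) (hv : ContDiffOn ℝ 1 v s)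
    (hbd : ∀ x ∈ frontier s, v x = u x) :
    obstacleEnergy μ s u - obstacleEnergy μ s v =
      ∫ x in s, (v x - u x) * ((Δ[s] u) x - 1) ∂μ -
        1 / 2 * ∫ x in s, ‖gradientWithin (fun y => v y - u y) s x‖ ^ 2 ∂μ := by
  have hu1 : ContDiffOn ℝ 1 u s := hu.of_le one_le_two
  have hw : ContDiffOn ℝ 1 (fun x => v x - u x) s := hv.sub hu1
  have hslope : ∫ x in s, (v x - u x) * ((Δ[s] u) x - 1) ∂μ =
      ∫ x in s, (v x - u x) * (Δ[s] u) x ∂μ - ∫ x in s, (v x - u x) ∂μ := by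
    simp only [mul_sub_one]
    exact integral_sub ((hw.continuousOn.mul
      (continuousOn_laplacianWithin hsu hu)).integrableOn_compact hsc)
      (hw.continuousOn.integrableOn_compact hsc)
  linarith [obstacleEnergy_sub_obstacleEnergy (μ := μ) hsc hsu hu1 hv,
    setIntegral_inner_gradientWithin_eq_neg (μ := μ) hs hsc hsu hw hu
      fun x hx => sub_eq_zero.2 (hbd x hx)]

theorem obstacleEnergy_sub_obstacleEnergy_le_of_slope_le [Nontrivial E] (hs : Convex ℝ s)
    (hsc : IsCompact s) (hsu : UniqueDiffOn ℝ s) (hu : ContDiffOn ℝ 2 u s)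
    (hv : ContDiffOn ℝ 1 v s) (hbd : ∀ x ∈ frontier s, v x = u x) {r N : ℝ} (hr0 : 0 ≤ r)
    (hr : s ⊆ Metric.closedBall 0 r) (hN0 : 0 ≤ N)
    (hN : ∫ x in s, (v x - u x) * ((Δ[s] u) x - 1) ∂μ ≤
      N * √(∫ x in s, (v x - u x) ^ 2 ∂μ)) :
    obstacleEnergy μ s u - obstacleEnergy μ s v ≤ 2 * (r * N) ^ 2 := by
  set D := ∫ x in s, ‖gradientWithin (fun y => v y - u y) s x‖ ^ 2 ∂μ
  have hD : √D ^ 2 = D := Real.sq_sqrt (integral_nonneg fun x => sq_nonneg _)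
  have hpoincare : √(∫ x in s, (v x - u x) ^ 2 ∂μ) ≤ 2 * r * √D := by
    refine (Real.sqrt_le_sqrt (setIntegral_sq_le_mul_setIntegral_norm_gradientWithin_sq hs hsc hsu
      (hv.sub (hu.of_le one_le_two)) (fun x hx => sub_eq_zero.2 (hbd x hx)) hr)).trans_eq ?_
    rw [Real.sqrt_mul (sq_nonneg _), Real.sqrt_sq (by positivity)]
  calc obstacleEnergy μ s u - obstacleEnergy μ s v
      ≤ N * √(∫ x in s, (v x - u x) ^ 2 ∂μ) - 1 / 2 * D := by
        rw [obstacleEnergy_sub_obstacleEnergy_eq_slope_sub hs hsc hsu hu hv hbd]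
        exact sub_le_sub_right hN _
    _ ≤ N * (2 * r * √D) - 1 / 2 * √D ^ 2 := by
        rw [hD]
        exact sub_le_sub_right (mul_le_mul_of_nonneg_left hpoincare hN0) _
    _ ≤ 2 * (r * N) ^ 2 := by linarith [sq_nonneg (√D - 2 * r * N)]

end ObstacleEnergy

section CauchySchwarz

theorem integral_mul_le_sqrt_integral_sq_mul_sqrt_integral_sq {α : Type*} [MeasurableSpace α]
    {μ : Measure α} {f g : α → ℝ} (hf : MemLp f 2 μ) (hg : MemLp g 2 μ) :
    ∫ x, f x * g x ∂μ ≤ √(∫ x, f x ^ 2 ∂μ) * √(∫ x, g x ^ 2 ∂μ) := by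
  have hholder := integral_mul_norm_le_Lp_mul_Lq Real.HolderConjugate.two_two
    (by simpa using hf) (by simpa using hg)
  simp only [Real.rpow_two, Real.norm_eq_abs, sq_abs, ← Real.sqrt_eq_rpow] at hholder
  refine ((le_abs_self _).trans abs_integral_le_integral_abs).trans ?_
  simpa only [abs_mul] using hholder

theorem setIntegral_mul_le_sqrt_setIntegral_sq_mul_sqrt_setIntegral_sq {X : Type*}
    [TopologicalSpace X] [T2Space X] [MeasurableSpace X] [OpensMeasurableSpace X]
    {μ : Measure X} [IsFiniteMeasureOnCompacts μ] {s : Set X} {f g : X → ℝ} (hs : IsCompact s)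
    (hf : ContinuousOn f s) (hg : ContinuousOn g s) :
    ∫ x in s, f x * g x ∂μ ≤ √(∫ x in s, f x ^ 2 ∂μ) * √(∫ x in s, g x ^ 2 ∂μ) := by
  have hmemLp {h : X → ℝ} (hh : ContinuousOn h s) : MemLp h 2 (μ.restrict s) :=
    (memLp_two_iff_integrable_sq (hh.aestronglyMeasurable_of_isCompact hs hs.measurableSet)).2
      ((hh.pow 2).integrableOn_compact hs)
  exact integral_mul_le_sqrt_integral_sq_mul_sqrt_integral_sq (hmemLp hf) (hmemLp hg)

end CauchySchwarz

section UnitBall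

open Metric InnerProductSpace

theorem setIntegral_ball_eq_setIntegral_closedBall {E F : Type*} [NormedAddCommGroup E]
    [NormedSpace ℝ E] [FiniteDimensional ℝ E] [MeasurableSpace E] [BorelSpace E] {μ : Measure E}
    [μ.IsAddHaarMeasure] [NormedAddCommGroup F] [NormedSpace ℝ F] {f g : E → F} {c : E} {r : ℝ}
    (hr : r ≠ 0) (hfg : EqOn f g (ball c r)) :
    ∫ x in ball c r, f x ∂μ = ∫ x in closedBall c r, g x ∂μ := by
  rw [setIntegral_congr_fun measurableSet_ball hfg]
  refine setIntegral_congr_set ?_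
  rw [← interior_closedBall c hr]
  exact interior_ae_eq_of_null_frontier ((convex_closedBall c r).addHaar_frontier μ)

theorem uniqueDiffOn_closedBall {E : Type*} [NormedAddCommGroup E] [NormedSpace ℝ E] (c : E)
    {r : ℝ} (hr : 0 < r) : UniqueDiffOn ℝ (closedBall c r) :=
  uniqueDiffOn_convex (convex_closedBall c r)
    ⟨c, by rw [interior_closedBall c hr.ne']; exact mem_ball_self hr⟩

variable {d : ℕ} {s : Set (EuclideanSpace ℝ (Fin d))} {g u v φ : EuclideanSpace ℝ (Fin d) → ℝ}

theorem lapl_eq_laplacianWithin {x : EuclideanSpace ℝ (Fin d)} (hs : UniqueDiffOn ℝ s)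
    (hx : s ∈ 𝓝 x) : lapl u x = (Δ[s] u) x := by
  rw [laplacianWithin_eq_iteratedFDerivWithin_orthonormalBasis u hs (mem_of_mem_nhds hx)
      (EuclideanSpace.basisFun (Fin d) ℝ),
    iteratedFDerivWithin_congr_set (eventuallyEq_univ.2 hx), iteratedFDerivWithin_univ]
  simp only [lapl, EuclideanSpace.basisFun_apply]

theorem Fob_eq_obstacleEnergy : Fob d u = obstacleEnergy volume (closedBall 0 1) u := by
  have hgrad : EqOn (fun x => ‖gradient u x‖ ^ 2)
      (fun x => ‖gradientWithin u (closedBall 0 1) x‖ ^ 2) (ball 0 1) := fun x hx => by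
    simp only [gradientWithin_of_mem_nhds (closedBall_mem_nhds_of_mem hx)]
  rw [Fob, obstacleEnergy, setIntegral_ball_eq_setIntegral_closedBall one_ne_zero hgrad,
    setIntegral_ball_eq_setIntegral_closedBall one_ne_zero fun x _ => rfl]

theorem KnormOb_nonneg : 0 ≤ KnormOb d g u :=
  le_max_left _ _

theorem KnormOb_eq_max_sSup_closedBall :
    KnormOb d g u = max 0 (sSup {r | ∃ v, MemKob d g v ∧
      ∫ x in closedBall 0 1, (v x - u x) ^ 2 ≠ 0 ∧
      r = (∫ x in closedBall 0 1, (v x - u x) * ((Δ[closedBall 0 1] u) x - 1)) /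
        √(∫ x in closedBall 0 1, (v x - u x) ^ 2)}) := by
  have hsq (v : EuclideanSpace ℝ (Fin d) → ℝ) :
      ∫ x in ball 0 1, (v x - u x) ^ 2 = ∫ x in closedBall 0 1, (v x - u x) ^ 2 :=
    setIntegral_ball_eq_setIntegral_closedBall one_ne_zero fun x _ => rfl
  have hslope (v : EuclideanSpace ℝ (Fin d) → ℝ) :
      ∫ x in ball 0 1, (v x - u x) * (lapl u x - 1) =
        ∫ x in closedBall 0 1, (v x - u x) * ((Δ[closedBall 0 1] u) x - 1) :=
    setIntegral_ball_eq_setIntegral_closedBall one_ne_zero fun x hx => by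
      simp only [lapl_eq_laplacianWithin (uniqueDiffOn_closedBall 0 one_pos)
        (closedBall_mem_nhds_of_mem hx)]
  simp only [KnormOb, hsq, hslope]

theorem setIntegral_slope_le_KnormOb_mul_sqrt (hu : MemKob d g u) (hv : MemKob d g v)
    (hu2 : ContDiffOn ℝ 2 u (closedBall 0 1)) :
    ∫ x in closedBall 0 1, (v x - u x) * ((Δ[closedBall 0 1] u) x - 1) ≤
      KnormOb d g u * √(∫ x in closedBall 0 1, (v x - u x) ^ 2) := by
  have hCS (w : EuclideanSpace ℝ (Fin d) → ℝ) (hw : MemKob d g w) :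
      ∫ x in closedBall 0 1, (w x - u x) * ((Δ[closedBall 0 1] u) x - 1) ≤
        √(∫ x in closedBall 0 1, ((Δ[closedBall 0 1] u) x - 1) ^ 2) *
          √(∫ x in closedBall 0 1, (w x - u x) ^ 2) := by
    rw [mul_comm]
    exact setIntegral_mul_le_sqrt_setIntegral_sq_mul_sqrt_setIntegral_sq
      (isCompact_closedBall 0 1) (hw.1.sub hu.1)
      ((continuousOn_laplacianWithin (uniqueDiffOn_closedBall 0 one_pos) hu2).sub
        continuousOn_const)
  rcases eq_or_ne (∫ x in closedBall 0 1, (v x - u x) ^ 2) 0 with h | h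
  · simpa only [h, Real.sqrt_zero, mul_zero] using hCS v hv
  · have hpos : 0 < √(∫ x in closedBall 0 1, (v x - u x) ^ 2) :=
      Real.sqrt_pos.2 (lt_of_le_of_ne (integral_nonneg fun x => sq_nonneg _) h.symm)
    rw [← div_le_iff₀ hpos, KnormOb_eq_max_sSup_closedBall]
    refine le_max_of_le_right (le_csSup ?_ ⟨v, hv, h, rfl⟩)
    refine ⟨√(∫ x in closedBall 0 1, ((Δ[closedBall 0 1] u) x - 1) ^ 2), ?_⟩
    rintro _ ⟨w, hw, -, rfl⟩
    exact div_le_of_le_mul₀ (Real.sqrt_nonneg _) (Real.sqrt_nonneg _) (hCS w hw)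

theorem eqOn_frontier_of_memKob (hu : MemKob d g u) (hv : MemKob d g v) :
    EqOn u v (frontier (closedBall 0 1)) := by
  rw [frontier_closedBall _ one_ne_zero]
  exact fun x hx => (hu.2.2 x hx).trans (hv.2.2 x hx).symm

theorem Fob_le_of_eulerLagrange (hφ : ContDiffOn ℝ 1 φ (closedBall 0 1))
    (hu : ContDiffOn ℝ 1 u (closedBall 0 1)) (hu0 : ∀ x ∈ ball 0 1, 0 ≤ u x)
    (hEL : ∫ x in ball 0 1, ⟪gradient φ x, gradient (fun y => u y - φ y) x⟫ =
      -∫ x in ball 0 1 ∩ {y | 0 < φ y}, (u x - φ x)) :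
    Fob d φ ≤ Fob d u := by
  have hgrad : ∫ x in ball 0 1, ⟪gradient φ x, gradient (fun y => u y - φ y) x⟫ =
      ∫ x in closedBall 0 1, ⟪gradientWithin (fun y => u y - φ y) (closedBall 0 1) x,
        gradientWithin φ (closedBall 0 1) x⟫ :=
    setIntegral_ball_eq_setIntegral_closedBall one_ne_zero fun x hx => by
      simp only [gradientWithin_of_mem_nhds (closedBall_mem_nhds_of_mem hx), real_inner_comm]
  rw [← interior_closedBall _ one_ne_zero] at hu0
  rw [hgrad, ← interior_closedBall _ one_ne_zero] at hEL
  simpa only [Fob_eq_obstacleEnergy] using obstacleEnergy_le_of_eulerLagrange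
    (convex_closedBall 0 1) (isCompact_closedBall 0 1) (uniqueDiffOn_closedBall 0 one_pos)
    hφ hu hu0 hEL

theorem Fob_sub_Fob_le_two_mul_KnormOb_sq [NeZero d] (hu : MemKob d g u) (hv : MemKob d g v)
    (hu2 : ContDiffOn ℝ 2 u (closedBall 0 1)) (hv1 : ContDiffOn ℝ 1 v (closedBall 0 1)) :
    Fob d u - Fob d v ≤ 2 * KnormOb d g u ^ 2 := by
  simpa only [Fob_eq_obstacleEnergy, one_mul] using obstacleEnergy_sub_obstacleEnergy_le_of_slope_le
    (convex_closedBall 0 1) (isCompact_closedBall 0 1) (uniqueDiffOn_closedBall 0 one_pos)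
    hu2 hv1 (eqOn_frontier_of_memKob hv hu) zero_le_one Subset.rfl KnormOb_nonneg
    (setIntegral_slope_le_KnormOb_mul_sqrt hu hv hu2)

end UnitBall

/-- **Constrained Łojasiewicz inequality (exponent 1/2) for the obstacle problem.**
There is `C > 0`, depending only on `d`, such that for every nonnegative continuous boundary
datum `g`, every solution `φ` of the obstacle problem with datum `g`, and every `u ∈ K_ob`
of class `C²` on the closed ball: `F_ob(u) ≥ F_ob(φ)` and
`(F_ob(u) - F_ob(φ))^{1/2} ≤ C ‖∇F_ob(u)‖_K`. -/
theorem constrained_loja_obstacle (d : ℕ) (hd : 1 ≤ d) :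
    ∃ C > (0:ℝ), ∀ g φ : EuclideanSpace ℝ (Fin d) → ℝ,
      ContinuousOn g (Metric.closedBall (0 : EuclideanSpace ℝ (Fin d)) 1) →
      (∀ x ∈ Metric.closedBall (0 : EuclideanSpace ℝ (Fin d)) 1, 0 ≤ g x) →
      MemKob d g φ →
      ContDiffOn ℝ 1 φ (Metric.closedBall (0 : EuclideanSpace ℝ (Fin d)) 1) →
      (∀ ψ : EuclideanSpace ℝ (Fin d) → ℝ,
        ContDiffOn ℝ 1 ψ (Metric.closedBall (0 : EuclideanSpace ℝ (Fin d)) 1) →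
        (∀ x ∈ Metric.sphere (0 : EuclideanSpace ℝ (Fin d)) 1, ψ x = 0) →
        (∫ x in Metric.ball (0 : EuclideanSpace ℝ (Fin d)) 1, ⟪gradient φ x, gradient ψ x⟫) =
          -∫ x in Metric.ball (0 : EuclideanSpace ℝ (Fin d)) 1 ∩ {y | 0 < φ y}, ψ x) →
      ∀ u : EuclideanSpace ℝ (Fin d) → ℝ, MemKob d g u →
        ContDiffOn ℝ 2 u (Metric.closedBall (0 : EuclideanSpace ℝ (Fin d)) 1) →
        Fob d φ ≤ Fob d u ∧ Real.sqrt (Fob d u - Fob d φ) ≤ C * KnormOb d g u := by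
  have : NeZero d := ⟨Nat.one_le_iff_ne_zero.1 hd⟩
  refine ⟨√2, by positivity, fun g φ _ _ hφ hφ1 hEL u hu hu2 => ⟨?_, ?_⟩⟩
  · have hu1 : ContDiffOn ℝ 1 u (Metric.closedBall 0 1) := hu2.of_le one_le_two
    refine Fob_le_of_eulerLagrange hφ1 hu1 hu.2.1 (hEL _ (hu1.sub hφ1) fun x hx => ?_)
    rw [hu.2.2 x hx, hφ.2.2 x hx, sub_self]
  · calc √(Fob d u - Fob d φ) ≤ √(2 * KnormOb d g u ^ 2) :=
          Real.sqrt_le_sqrt (Fob_sub_Fob_le_two_mul_KnormOb_sq hu hφ hu2 hφ1)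
      _ = √2 * KnormOb d g u := by
          rw [Real.sqrt_mul zero_le_two, Real.sqrt_sq KnormOb_nonneg]
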